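/- arXiv:1205.2542 — 3 statements merged into one kernel-verified Lean document; each statement's English description precedes it below -/
import Mathlib

section
/- For every compact set K ⊂ ℝ^d, the set of indices (n,k) such that K ∩ B(x_{n,k}, 2^{1−n/2}) ≠ ∅ is finite. -/
open MeasureTheory Metric Real Filter Topology NNReal ENNReal

noncomputable section

abbrev E (d : ℕ) := EuclideanSpace ℝ (Fin d)

/-- The auxiliary function ρ associated with the potential `V`. -/
def rho (d : ℕ) (V : E d → ℝ) (x : E d) : ℝ :=
  sSup {r : ℝ | 0 < r ∧ r ^ ((2:ℝ) - (d:ℝ)) * (∫ y in ball x r, V y) ≤ 1}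

/-- The reverse Hölder class `RH_{d/2}`. -/
def IsRH (d : ℕ) (V : E d → ℝ) : Prop :=
  ∃ C : ℝ, 0 < C ∧ ∀ (x : E d) (r : ℝ), 0 < r →
    ((volume (ball x r)).toReal⁻¹ * ∫ y in ball x r, (V y) ^ ((d:ℝ)/2)) ^ ((2:ℝ)/(d:ℝ)) ≤
      C * ((volume (ball x r)).toReal⁻¹ * ∫ y in ball x r, V y)

/-- The set `𝓑_n = {x : 2^{-(n+1)/2} < ρ(x) ≤ 2^{-n/2}}`. -/
def Bset (d : ℕ) (V : E d → ℝ) (n : ℤ) : Set (E d) :=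
  {x | (2:ℝ) ^ (-((n:ℝ)+1)/2) < rho d V x ∧ rho d V x ≤ (2:ℝ) ^ (-(n:ℝ)/2)}

/-- Average of `f` over the ball `B(x,r)`. -/
def ballAvg (d : ℕ) (f : E d → ℝ) (x : E d) (r : ℝ) : ℝ :=
  (volume (ball x r)).toReal⁻¹ * ∫ y in ball x r, f y

/-- Mean oscillation of `f` over the ball `B(x,r)`. -/
def oscB (d : ℕ) (f : E d → ℝ) (x : E d) (r : ℝ) : ℝ :=
  ballAvg d (fun y => |f y - ballAvg d f x r|) x r

/-- The BMO seminorm, as an extended nonnegative real. -/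
def bmoNormE (d : ℕ) (f : E d → ℝ) : ℝ≥0∞ :=
  ⨆ (x : E d) (r : ℝ) (_ : 0 < r), ENNReal.ofReal (oscB d f x r)

/-- The `bmo_n` norm, as an extended nonnegative real. -/
def bmonNorm (d : ℕ) (n : ℤ) (f : E d → ℝ) : ℝ≥0∞ :=
  bmoNormE d f +
    ⨆ (x : E d) (r : ℝ) (_ : (2:ℝ) ^ (-(n:ℝ)/2) ≤ r),
      ENNReal.ofReal (ballAvg d (fun y => |f y|) x r)

/-- The `BMO_L` norm, as an extended nonnegative real. -/
def bmoLNorm (d : ℕ) (V : E d → ℝ) (f : E d → ℝ) : ℝ≥0∞ :=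
  bmoNormE d f +
    ⨆ (x : E d) (r : ℝ) (_ : rho d V x ≤ r),
      ENNReal.ofReal (ballAvg d (fun y => |f y|) x r)

/-- The Gauss function `P(x) = (4π)^{-d/2} e^{-|x|²/4}`. -/
def gaussP (d : ℕ) (x : E d) : ℝ := (4 * π) ^ (-(d:ℝ)/2) * Real.exp (-(‖x‖^2)/4)

/-- The local maximal function `𝓜_n f(x) = sup_{0<t<2^{-n/2}} |P_t * f(x)|`. -/
def MnMax (d : ℕ) (n : ℤ) (f : E d → ℝ) (x : E d) : ℝ≥0∞ :=
  ⨆ (t : ℝ) (_ : 0 < t ∧ t < (2:ℝ) ^ (-(n:ℝ)/2)),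
    ENNReal.ofReal |∫ z, t ^ (-(d:ℝ)) * gaussP d (t⁻¹ • (x - z)) * f z|

/-- The `h^1_n` norm `‖𝓜_n f‖_{L¹}`, as an extended nonnegative real. -/
def h1nNorm (d : ℕ) (n : ℤ) (f : E d → ℝ) : ℝ≥0∞ := ∫⁻ x, MnMax d n f x

/-- Membership in the local Hardy space `h^1_n`. -/
def Memh1n (d : ℕ) (n : ℤ) (f : E d → ℝ) : Prop :=
  Integrable f volume ∧ h1nNorm d n f < ⊤

/-- `(H^1_L, q)`-atoms related to the ball `B(x₀, r)`, with `L`-constant `CL`. -/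
def IsHLAtom (d : ℕ) (V : E d → ℝ) (CL : ℝ) (q : ℝ≥0∞) (a : E d → ℝ) (x₀ : E d) (r : ℝ) :
    Prop :=
  r ≤ CL * rho d V x₀ ∧ Function.support a ⊆ ball x₀ r ∧
    eLpNorm a q volume ≤ (volume (ball x₀ r)) ^ (1 / q.toReal - 1) ∧
    (r ≤ rho d V x₀ / CL → (∫ x, a x) = 0)

section FiniteOverlap

variable {ι X : Type*} [PseudoMetricSpace X] {I : Set ι} {c : ι → X} {r : ι → ℝ} {K : Set X}

theorem eventually_subset_ball_mul (hK : Bornology.IsBounded K) (x : X) {ρ : ℝ} (hρ : 0 < ρ) :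
    ∀ᶠ R in atTop, K ⊆ ball x (R * ρ) := by
  obtain ⟨M, hKM⟩ := hK.subset_ball x
  filter_upwards [eventually_ge_atTop (M / ρ)] with R hR
  exact hKM.trans (ball_subset_ball ((div_le_iff₀ hρ).1 hR))

/- For `R ≥ t` so large that `ball x (R * ρ)` contains `K`, every dilate by `t` that meets `K` is
already counted by the overlap at scale `R`. -/
theorem finite_setOf_inter_ball_mul_nonempty {x : X} {ρ : ℝ} (hρ : 0 < ρ) (hr : ∀ i ∈ I, 0 ≤ r i)
    (hoverlap : ∃ᶠ R in atTop,
      {i ∈ I | (ball x (R * ρ) ∩ ball (c i) (R * r i)).Nonempty}.Finite)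
    (hK : Bornology.IsBounded K) (t : ℝ) :
    {i ∈ I | (K ∩ ball (c i) (t * r i)).Nonempty}.Finite := by
  obtain ⟨R, hfin, hKR, htR⟩ :=
    (hoverlap.and_eventually
      ((eventually_subset_ball_mul hK x hρ).and (eventually_ge_atTop t))).exists
  refine hfin.subset fun i ⟨hi, hmeet⟩ => ⟨hi, hmeet.mono (Set.inter_subset_inter hKR ?_)⟩
  exact ball_subset_ball (mul_le_mul_of_nonneg_right htR (hr i hi))

theorem stmt4_general (hr : ∀ i ∈ I, 0 < r i)
    (hoverlap : ∀ i ∈ I, ∃ᶠ R in atTop,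
      {j ∈ I | (ball (c i) (R * r i) ∩ ball (c j) (R * r j)).Nonempty}.Finite)
    (hK : Bornology.IsBounded K) (t : ℝ) :
    {i ∈ I | (K ∩ ball (c i) (t * r i)).Nonempty}.Finite := by
  obtain rfl | ⟨i, hi⟩ := I.eq_empty_or_nonempty
  · exact Set.finite_empty.subset fun _ h => h.1
  · exact finite_setOf_inter_ball_mul_nonempty (hr i hi) (fun j hj => (hr j hj).le)
      (hoverlap i hi) hK t

end FiniteOverlap

theorem rpow_one_sub_div_two {a : ℝ} (ha : 0 < a) (s : ℝ) :
    a ^ (1 - s / 2) = a * a ^ (-s / 2) := by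
  rw [sub_eq_add_neg, ← neg_div, rpow_add ha, Real.rpow_one]

/-- For every compact set `K`, only finitely many of the balls `B(x_{n,k}, 2^{1-n/2})`
meet `K`. -/
theorem stmt4 (d : ℕ) (hd : 3 ≤ d) (V : E d → ℝ) (hV0 : ∀ x, 0 ≤ V x)
    (hVloc : LocallyIntegrable V volume) (hVne : ¬ (V =ᵐ[volume] (0 : E d → ℝ)))
    (hRH : IsRH d V)
    (J : ℤ → Set ℕ) (pt : ℤ → ℕ → E d)
    (hpt : ∀ n k, k ∈ J n → pt n k ∈ Bset d V n)
    (hcover : ∀ n, Bset d V n ⊆ ⋃ k ∈ J n, ball (pt n k) ((2:ℝ) ^ (-(n:ℝ)/2)))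
    (Cp : ℝ) (hCp : 0 < Cp)
    (hover : ∀ n k, k ∈ J n → ∀ R : ℝ, 2 ≤ R →
      {p : ℤ × ℕ | p.2 ∈ J p.1 ∧
        (ball (pt n k) (R * (2:ℝ) ^ (-(n:ℝ)/2)) ∩
          ball (pt p.1 p.2) (R * (2:ℝ) ^ (-(p.1:ℝ)/2))).Nonempty}.Finite ∧
      (Nat.card {p : ℤ × ℕ | p.2 ∈ J p.1 ∧
        (ball (pt n k) (R * (2:ℝ) ^ (-(n:ℝ)/2)) ∩
          ball (pt p.1 p.2) (R * (2:ℝ) ^ (-(p.1:ℝ)/2))).Nonempty} : ℝ) ≤ R ^ Cp) :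
    ∀ K : Set (E d), IsCompact K →
      {p : ℤ × ℕ | p.2 ∈ J p.1 ∧
        (K ∩ ball (pt p.1 p.2) ((2:ℝ) ^ (1 - (p.1:ℝ)/2))).Nonempty}.Finite := by
  intro K hK
  have hoverlap (p : ℤ × ℕ) (hp : p.2 ∈ J p.1) := (eventually_ge_atTop 2).frequently.mono
    fun R hR => (hover p.1 p.2 hp R hR).1
  simpa only [Set.mem_ofPred_eq, rpow_one_sub_div_two two_pos] using
    stmt4_general (I := {p : ℤ × ℕ | p.2 ∈ J p.1}) (fun _ _ => rpow_pos_of_pos two_pos _)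
      hoverlap hK.isBounded 2
end
end

section
/- There exists a constant C > 0 such that for every x ∈ ℝ^d, the number of indices (n,k) with B(x_{n,k}, 2^{1−n/2}) ∩ B(x, 2ρ(x)) ≠ ∅ is at most C. -/
open MeasureTheory Metric Real Filter Topology NNReal ENNReal

noncomputable section

/-!
Every `x` with `ρ(x) > 0` lies in some layer `𝓑_n`, hence in a ball `B(x_{n,k}, r)` of the family
with `r = 2^{-n/2} ≥ ρ(x)`. Then `B(x, 2ρ(x)) ⊆ B(x_{n,k}, 3r)`, so every doubled ball meeting
`B(x, 2ρ(x))` has a threefold dilate meeting `B(x_{n,k}, 3r)`, and the overlap bound at the dilation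
factor `3` counts these.
-/

/-- `HasCardLE s N` says that the set `s` has at most `N` elements. Finiteness is demanded
separately because `Nat.card` is `0` on infinite sets. -/
def HasCardLE {ι : Type*} (s : Set ι) (N : ℝ) : Prop :=
  s.Finite ∧ (Nat.card s : ℝ) ≤ N

namespace HasCardLE

variable {ι : Type*} {s t : Set ι} {N : ℝ}

theorem empty (hN : 0 ≤ N) : HasCardLE (∅ : Set ι) N :=
  ⟨Set.finite_empty, by simpa using hN⟩

theorem mono (hst : s ⊆ t) (ht : HasCardLE t N) : HasCardLE s N :=
  ⟨ht.1.subset hst, (Nat.cast_le.2 (Nat.card_mono ht.1 hst)).trans ht.2⟩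

end HasCardLE

section BoundedOverlap

variable {X : Type*} [PseudoMetricSpace X]

theorem ball_mul_subset_ball_add_one_mul {x c : X} {a ρ r : ℝ} (ha : 0 ≤ a)
    (hx : x ∈ ball c r) (hρ : ρ ≤ r) : ball x (a * ρ) ⊆ ball c ((a + 1) * r) := by
  refine ball_subset_ball' ?_
  calc a * ρ + dist x c ≤ a * r + r := by gcongr; exact (mem_ball.1 hx).le
    _ = (a + 1) * r := by ring

theorem hasCardLE_inter_ball_nonempty {ι : Type*} {s : Set ι} {c : ι → X} {r : ι → ℝ}
    {ρ : X → ℝ} {a N : ℝ} (ha : 0 ≤ a) (hN : 0 ≤ N) (hr : ∀ i ∈ s, 0 ≤ r i)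
    (hcover : ∀ x, 0 < ρ x → ∃ i ∈ s, x ∈ ball (c i) (r i) ∧ ρ x ≤ r i)
    (hoverlap : ∀ i ∈ s, HasCardLE
      {j | j ∈ s ∧ (ball (c i) ((a + 1) * r i) ∩ ball (c j) ((a + 1) * r j)).Nonempty} N)
    (x : X) :
    HasCardLE {j | j ∈ s ∧ (ball (c j) (a * r j) ∩ ball x (a * ρ x)).Nonempty} N := by
  rcases le_or_gt (ρ x) 0 with hρ | hρ
  · have hball : ball x (a * ρ x) = ∅ := ball_eq_empty.2 (mul_nonpos_of_nonneg_of_nonpos ha hρ)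
    simpa only [hball, Set.inter_empty, Set.not_nonempty_empty, and_false, Set.ofPred_false]
      using HasCardLE.empty hN
  · obtain ⟨i, hi, hxi, hρi⟩ := hcover x hρ
    refine (hoverlap i hi).mono ?_
    rintro j ⟨hj, z, hzj, hzx⟩
    have hdilate : a * r j ≤ (a + 1) * r j :=
      mul_le_mul_of_nonneg_right (le_add_of_nonneg_right zero_le_one) (hr j hj)
    exact ⟨hj, z, ball_mul_subset_ball_add_one_mul ha hxi hρi hzx, ball_subset_ball hdilate hzj⟩

end BoundedOverlap

theorem rpow_one_sub_div_two_s5 {b : ℝ} (hb : 0 < b) (t : ℝ) :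
    b ^ (1 - t / 2) = b * b ^ (-t / 2) := by
  rw [sub_eq_add_neg, ← neg_div, rpow_add hb, Real.rpow_one]

theorem exists_int_rpow_neg_half_lt_and_le {b t : ℝ} (hb : 1 < b) (ht : 0 < t) :
    ∃ n : ℤ, b ^ (-((n : ℝ) + 1) / 2) < t ∧ t ≤ b ^ (-(n : ℝ) / 2) := by
  refine ⟨⌊-2 * logb b t⌋, ?_, ?_⟩
  · rw [← lt_logb_iff_rpow_lt hb ht]
    linarith [Int.lt_floor_add_one (-2 * logb b t)]
  · rw [← logb_le_iff_le_rpow hb ht]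
    linarith [Int.floor_le (-2 * logb b t)]

section Layers

variable {X : Type*} {ρ : X → ℝ}

/-- The `n`-th layer `{x : 2^{-(n+1)/2} < ρ(x) ≤ 2^{-n/2}}` of a real function `ρ`; the set
`Bset d V n` is the case `ρ = rho d V`. -/
def dyadicLayer (ρ : X → ℝ) (n : ℤ) : Set X :=
  {x | (2 : ℝ) ^ (-((n : ℝ) + 1) / 2) < ρ x ∧ ρ x ≤ (2 : ℝ) ^ (-(n : ℝ) / 2)}

theorem exists_mem_dyadicLayer {x : X} (hx : 0 < ρ x) : ∃ n, x ∈ dyadicLayer ρ n :=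
  exists_int_rpow_neg_half_lt_and_le one_lt_two hx

theorem stmt5_general [PseudoMetricSpace X] {κ : Type*} (J : ℤ → Set κ) (pt : ℤ → κ → X)
    (hcover : ∀ n, dyadicLayer ρ n ⊆ ⋃ k ∈ J n, ball (pt n k) ((2 : ℝ) ^ (-(n : ℝ) / 2)))
    {a N : ℝ} (ha : 0 ≤ a) (hN : 0 ≤ N)
    (hoverlap : ∀ n k, k ∈ J n → HasCardLE {p : ℤ × κ | p.2 ∈ J p.1 ∧
      (ball (pt n k) ((a + 1) * (2 : ℝ) ^ (-(n : ℝ) / 2)) ∩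
        ball (pt p.1 p.2) ((a + 1) * (2 : ℝ) ^ (-(p.1 : ℝ) / 2))).Nonempty} N)
    (x : X) :
    HasCardLE {p : ℤ × κ | p.2 ∈ J p.1 ∧
      (ball (pt p.1 p.2) (a * (2 : ℝ) ^ (-(p.1 : ℝ) / 2)) ∩ ball x (a * ρ x)).Nonempty} N := by
  refine hasCardLE_inter_ball_nonempty (s := {p : ℤ × κ | p.2 ∈ J p.1}) (c := fun p ↦ pt p.1 p.2)
    ha hN (fun p _ ↦ by positivity) (fun y hy ↦ ?_) (fun p hp ↦ hoverlap p.1 p.2 hp) x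
  obtain ⟨n, hn⟩ := exists_mem_dyadicLayer hy
  obtain ⟨k, hk, hyk⟩ := Set.mem_iUnion₂.1 (hcover n hn)
  exact ⟨(n, k), hk, hyk, hn.2⟩

end Layers

/-- There is a uniform bound on the number of balls `B(x_{n,k}, 2^{1-n/2})` meeting
`B(x, 2ρ(x))`. -/
theorem stmt5 (d : ℕ) (hd : 3 ≤ d) (V : E d → ℝ) (hV0 : ∀ x, 0 ≤ V x)
    (hVloc : LocallyIntegrable V volume) (hVne : ¬ (V =ᵐ[volume] (0 : E d → ℝ)))
    (hRH : IsRH d V)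
    (J : ℤ → Set ℕ) (pt : ℤ → ℕ → E d)
    (hpt : ∀ n k, k ∈ J n → pt n k ∈ Bset d V n)
    (hcover : ∀ n, Bset d V n ⊆ ⋃ k ∈ J n, ball (pt n k) ((2:ℝ) ^ (-(n:ℝ)/2)))
    (Cp : ℝ) (hCp : 0 < Cp)
    (hover : ∀ n k, k ∈ J n → ∀ R : ℝ, 2 ≤ R →
      {p : ℤ × ℕ | p.2 ∈ J p.1 ∧
        (ball (pt n k) (R * (2:ℝ) ^ (-(n:ℝ)/2)) ∩
          ball (pt p.1 p.2) (R * (2:ℝ) ^ (-(p.1:ℝ)/2))).Nonempty}.Finite ∧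
      (Nat.card {p : ℤ × ℕ | p.2 ∈ J p.1 ∧
        (ball (pt n k) (R * (2:ℝ) ^ (-(n:ℝ)/2)) ∩
          ball (pt p.1 p.2) (R * (2:ℝ) ^ (-(p.1:ℝ)/2))).Nonempty} : ℝ) ≤ R ^ Cp) :
    ∃ C : ℝ, 0 < C ∧ ∀ x : E d,
      {p : ℤ × ℕ | p.2 ∈ J p.1 ∧
        (ball (pt p.1 p.2) ((2:ℝ) ^ (1 - (p.1:ℝ)/2)) ∩ ball x (2 * rho d V x)).Nonempty}.Finite ∧
      (Nat.card {p : ℤ × ℕ | p.2 ∈ J p.1 ∧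
        (ball (pt p.1 p.2) ((2:ℝ) ^ (1 - (p.1:ℝ)/2)) ∩
          ball x (2 * rho d V x)).Nonempty} : ℝ) ≤ C := by
  simp only [rpow_one_sub_div_two_s5 two_pos]
  exact ⟨(2 + 1) ^ Cp, by positivity, stmt5_general J pt hcover zero_le_two (by positivity)
    fun n k hk ↦ hover n k hk (2 + 1) (by norm_num)⟩
end
end

section
/- For every A > 0 there exists a constant C > 0, depending only on d and A, such that for every n ∈ ℤ, every x₀ ∈ ℝ^d, every C^∞ function ψ : ℝ^d → ℝ with 0 ≤ ψ ≤ 1, supp ψ ⊂ B(x₀, 2^{1−n/2}) and ‖∇ψ‖_{L^∞} ≤ A·2^{n/2}, and every locally integrable f with ‖f‖_{bmo_n} < ∞, one has ‖ψ f‖_{bmo_n} ≤ C ‖f‖_{bmo_n}. -/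
open MeasureTheory Metric Real Filter Topology NNReal ENNReal

noncomputable section

/-!
Compare `ψ f` on a ball `B = B(x, r)` with the constant `ψ(x) f_B`:
`ψ f - ψ(x) f_B = ψ (f - f_B) + (ψ - ψ(x)) f_B`, where the first term is controlled by the mean
oscillation of `f` and the second one by `L r |f_B|`, with `L` a Lipschitz constant of `ψ`.
Averages of a `BMO` function over concentric balls grow at most linearly in the number of
doublings, so if `2 ^ k r` is comparable to the scale `R` then `|f_B| ≲ (1 + k) ‖f‖`. As
`(1 + k) r ≤ 2 ^ k r ≲ R`, the second term is at most a multiple of `L R ‖f‖`. On balls of radius at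
least `R` the mean of `|ψ f|` is bounded directly.
-/

section Average

variable {α F : Type*} [MeasurableSpace α] {μ : Measure α} {s t : Set α}
  [NormedAddCommGroup F] [NormedSpace ℝ F]

lemma enorm_setAverage_le (f : α → F) :
    ‖⨍ x in s, f x ∂μ‖ₑ ≤ ⨍⁻ x in s, ‖f x‖ₑ ∂μ :=
  enorm_integral_le_lintegral_enorm f

lemma setLAverage_add_const (hs₀ : μ s ≠ 0) (hs : μ s ≠ ∞) (g : α → ℝ≥0∞) (c : ℝ≥0∞) :
    ⨍⁻ x in s, (g x + c) ∂μ = ⨍⁻ x in s, g x ∂μ + c := by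
  conv_rhs => rw [← setLAverage_const hs₀ hs c]
  exact lintegral_add_right g measurable_const

lemma setLAverage_const_mul {c : ℝ≥0∞} (hc : c ≠ ∞) (g : α → ℝ≥0∞) :
    ⨍⁻ x in s, c * g x ∂μ = c * ⨍⁻ x in s, g x ∂μ :=
  lintegral_const_mul' c g hc

lemma setLAverage_mono (hs : MeasurableSet s) {g h : α → ℝ≥0∞} (hgh : ∀ x ∈ s, g x ≤ h x) :
    ⨍⁻ x in s, g x ∂μ ≤ ⨍⁻ x in s, h x ∂μ :=
  laverage_mono_ae (ae_restrict_of_forall_mem hs hgh)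

lemma setLAverage_le_mul_setLAverage_of_subset (ht₀ : μ t ≠ 0) (ht : μ t ≠ ∞) (hst : s ⊆ t)
    {K : ℝ≥0} (hK : μ t ≤ K * μ s) (g : α → ℝ≥0∞) :
    ⨍⁻ x in s, g x ∂μ ≤ K * ⨍⁻ x in t, g x ∂μ := by
  have hinv : (μ s)⁻¹ ≤ K * (μ t)⁻¹ := by
    rw [← div_eq_mul_inv, ENNReal.le_div_iff_mul_le (.inl ht₀) (.inl ht), mul_comm,
      ← div_eq_mul_inv]
    exact ENNReal.div_le_of_le_mul hK
  rw [setLAverage_eq, setLAverage_eq, ENNReal.div_eq_inv_mul, ENNReal.div_eq_inv_mul, ← mul_assoc]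
  exact mul_le_mul' hinv (lintegral_mono_set hst)

lemma enorm_setAverage_sub_le [CompleteSpace F] (hs₀ : μ s ≠ 0) (hs : μ s ≠ ∞) {f : α → F}
    (hf : IntegrableOn f s μ) (c : F) :
    ‖⨍ x in s, f x ∂μ - c‖ₑ ≤ ⨍⁻ x in s, ‖f x - c‖ₑ ∂μ := by
  have hsub : ⨍ x in s, (f x - c) ∂μ = ⨍ x in s, f x ∂μ - c := by
    conv_rhs => rw [← setAverage_const hs₀ hs c]
    exact integral_sub hf.to_average (integrableOn_const hs).to_average
  exact hsub ▸ enorm_setAverage_le fun x => f x - c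

/-- The mean oscillation of `f` over the set `s`. It takes values in `ℝ≥0∞` and the inner mean is a
Bochner average, which is `0` if `f` is not integrable on `s`. -/
def meanOsc (μ : Measure α) (f : α → F) (s : Set α) : ℝ≥0∞ :=
  ⨍⁻ x in s, ‖f x - ⨍ y in s, f y ∂μ‖ₑ ∂μ

lemma meanOsc_le_two_mul [CompleteSpace F] (hs₀ : μ s ≠ 0) (hs : μ s ≠ ∞) {f : α → F}
    (hf : IntegrableOn f s μ) (c : F) :
    meanOsc μ f s ≤ 2 * ⨍⁻ x in s, ‖f x - c‖ₑ ∂μ := by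
  have htri (x : α) :
      ‖f x - ⨍ y in s, f y ∂μ‖ₑ ≤ ‖f x - c‖ₑ + ‖⨍ y in s, f y ∂μ - c‖ₑ := by
    simpa only [edist_eq_enorm_sub] using edist_triangle_right (f x) (⨍ y in s, f y ∂μ) c
  calc meanOsc μ f s
      ≤ ⨍⁻ x in s, (‖f x - c‖ₑ + ‖⨍ y in s, f y ∂μ - c‖ₑ) ∂μ :=
        laverage_mono_ae (ae_of_all _ htri)
    _ = ⨍⁻ x in s, ‖f x - c‖ₑ ∂μ + ‖⨍ y in s, f y ∂μ - c‖ₑ := setLAverage_add_const hs₀ hs _ _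
    _ ≤ ⨍⁻ x in s, ‖f x - c‖ₑ ∂μ + ⨍⁻ x in s, ‖f x - c‖ₑ ∂μ := by
        gcongr
        exact enorm_setAverage_sub_le hs₀ hs hf c
    _ = 2 * ⨍⁻ x in s, ‖f x - c‖ₑ ∂μ := (two_mul _).symm

end Average

section LocalBMO

variable {X F : Type*} [PseudoMetricSpace X] [NormedAddCommGroup F]

lemma enorm_smul_sub_smul_le {𝕜 : Type*} [NormedField 𝕜] [NormedSpace 𝕜 F] {ψ : X → 𝕜} {b L : ℝ≥0}
    {x y : X} {r : ℝ} (hb : ‖ψ y‖₊ ≤ b) (hψ : LipschitzWith L ψ) (hy : y ∈ ball x r) (u c : F) :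
    ‖ψ y • u - ψ x • c‖ₑ ≤ b * ‖u - c‖ₑ + L * (ENNReal.ofReal r * ‖c‖ₑ) := by
  have hdist : edist y x ≤ ENNReal.ofReal r := by
    rw [edist_dist]
    exact ENNReal.ofReal_le_ofReal (mem_ball.1 hy).le
  calc ‖ψ y • u - ψ x • c‖ₑ
      = ‖ψ y • (u - c) + (ψ y - ψ x) • c‖ₑ := by
        rw [smul_sub, sub_smul, sub_add_sub_cancel]
    _ ≤ ‖ψ y‖ₑ * ‖u - c‖ₑ + edist (ψ y) (ψ x) * ‖c‖ₑ := by
        rw [edist_eq_enorm_sub, ← enorm_smul, ← enorm_smul]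
        exact enorm_add_le _ _
    _ ≤ b * ‖u - c‖ₑ + L * edist y x * ‖c‖ₑ := by
        gcongr
        · exact ENNReal.coe_le_coe.2 hb
        · exact hψ y x
    _ ≤ b * ‖u - c‖ₑ + L * (ENNReal.ofReal r * ‖c‖ₑ) := by
        rw [mul_assoc]
        gcongr

variable [MeasurableSpace X] {μ : Measure X} {K : ℝ≥0} {x : X} {r R : ℝ} {f : X → F}

/-- The supremum of the means of `‖f‖` over the balls of radius at least `R`. -/
def largeBallNorm (μ : Measure X) (R : ℝ) (f : X → F) : ℝ≥0∞ :=
  ⨆ (x : X) (r : ℝ) (_ : R ≤ r), ⨍⁻ y in ball x r, ‖f y‖ₑ ∂μ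

lemma setLAverage_enorm_ball_le_largeBallNorm (hr : R ≤ r) :
    ⨍⁻ y in ball x r, ‖f y‖ₑ ∂μ ≤ largeBallNorm μ R f :=
  le_iSup_of_le x (le_iSup₂_of_le r hr le_rfl)

lemma largeBallNorm_smul_le {𝕜 : Type*} [NormedField 𝕜] [NormedSpace 𝕜 F] {ψ : X → 𝕜} {b : ℝ≥0}
    (hb : ∀ y, ‖ψ y‖₊ ≤ b) :
    largeBallNorm μ R (fun y => ψ y • f y) ≤ b * largeBallNorm μ R f := by
  refine iSup_le fun x => iSup₂_le fun r hr => ?_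
  calc ⨍⁻ y in ball x r, ‖ψ y • f y‖ₑ ∂μ
      ≤ ⨍⁻ y in ball x r, b * ‖f y‖ₑ ∂μ := by
        refine laverage_mono_ae (ae_of_all _ fun y => ?_)
        exact (enorm_smul (ψ y) (f y)).trans_le (mul_le_mul' (ENNReal.coe_le_coe.2 (hb y)) le_rfl)
    _ = b * ⨍⁻ y in ball x r, ‖f y‖ₑ ∂μ := setLAverage_const_mul ENNReal.coe_ne_top _
    _ ≤ b * largeBallNorm μ R f := by
        gcongr
        exact setLAverage_enorm_ball_le_largeBallNorm hr

lemma integrableOn_ball_of_locallyIntegrable [ProperSpace X] (hf : LocallyIntegrable f μ) :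
    IntegrableOn f (ball x r) μ :=
  (hf.integrableOn_isCompact (isCompact_closedBall x r)).mono_set ball_subset_closedBall

variable [NormedSpace ℝ F]

/-- The `BMO` seminorm of `f`: the supremum of its mean oscillations over balls. -/
def bmoSeminorm (μ : Measure X) (f : X → F) : ℝ≥0∞ :=
  ⨆ (x : X) (r : ℝ) (_ : 0 < r), meanOsc μ f (ball x r)

/-- The norm of the local space `bmo` at scale `R`: it controls oscillations over all balls, and
means of `‖f‖` only over balls of radius at least `R`. -/
def localBMONorm (μ : Measure X) (R : ℝ) (f : X → F) : ℝ≥0∞ :=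
  bmoSeminorm μ f + largeBallNorm μ R f

lemma meanOsc_ball_le_bmoSeminorm (hr : 0 < r) : meanOsc μ f (ball x r) ≤ bmoSeminorm μ f :=
  le_iSup_of_le x (le_iSup₂_of_le r hr le_rfl)

section Growth

variable [ProperSpace X] [μ.IsOpenPosMeasure] [IsFiniteMeasureOnCompacts μ]
  [CompleteSpace F]

lemma enorm_average_ball_le_average_ball_two_mul_add
    (hK : ∀ x r, μ (ball x (2 * r)) ≤ K * μ (ball x r)) (hf : LocallyIntegrable f μ) (hr : 0 < r) :
    ‖⨍ y in ball x r, f y ∂μ‖ₑ ≤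
      ‖⨍ y in ball x (2 * r), f y ∂μ‖ₑ + K * bmoSeminorm μ f := by
  have hr2 : 0 < 2 * r := by positivity
  set c := ⨍ y in ball x (2 * r), f y ∂μ
  have hdiff : ‖⨍ y in ball x r, f y ∂μ - c‖ₑ ≤ K * bmoSeminorm μ f :=
    calc ‖⨍ y in ball x r, f y ∂μ - c‖ₑ
        ≤ ⨍⁻ y in ball x r, ‖f y - c‖ₑ ∂μ :=
          enorm_setAverage_sub_le (measure_ball_pos μ x hr).ne' measure_ball_lt_top.ne
            (integrableOn_ball_of_locallyIntegrable hf) c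
      _ ≤ K * meanOsc μ f (ball x (2 * r)) :=
          setLAverage_le_mul_setLAverage_of_subset (measure_ball_pos μ x hr2).ne'
            measure_ball_lt_top.ne (ball_subset_ball (by linarith)) (hK x r) _
      _ ≤ K * bmoSeminorm μ f := by
          gcongr
          exact meanOsc_ball_le_bmoSeminorm hr2
  calc ‖⨍ y in ball x r, f y ∂μ‖ₑ
      = ‖c + (⨍ y in ball x r, f y ∂μ - c)‖ₑ := by rw [add_sub_cancel]
    _ ≤ ‖c‖ₑ + ‖⨍ y in ball x r, f y ∂μ - c‖ₑ := enorm_add_le _ _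
    _ ≤ ‖c‖ₑ + K * bmoSeminorm μ f := by gcongr

lemma enorm_average_ball_le_average_ball_two_pow_mul_add
    (hK : ∀ x r, μ (ball x (2 * r)) ≤ K * μ (ball x r)) (hf : LocallyIntegrable f μ) (hr : 0 < r)
    (k : ℕ) :
    ‖⨍ y in ball x r, f y ∂μ‖ₑ ≤
      ‖⨍ y in ball x (2 ^ k * r), f y ∂μ‖ₑ + k * (K * bmoSeminorm μ f) := by
  induction k with
  | zero => simp
  | succ k ih =>
    have hstep := enorm_average_ball_le_average_ball_two_mul_add (x := x) hK hf
      (show 0 < 2 ^ k * r by positivity)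
    rw [← mul_assoc, ← pow_succ'] at hstep
    calc ‖⨍ y in ball x r, f y ∂μ‖ₑ
        ≤ ‖⨍ y in ball x (2 ^ k * r), f y ∂μ‖ₑ + k * (K * bmoSeminorm μ f) := ih
      _ ≤ (‖⨍ y in ball x (2 ^ (k + 1) * r), f y ∂μ‖ₑ + K * bmoSeminorm μ f)
            + k * (K * bmoSeminorm μ f) := by gcongr
      _ = ‖⨍ y in ball x (2 ^ (k + 1) * r), f y ∂μ‖ₑ
            + (k + 1 : ℕ) * (K * bmoSeminorm μ f) := by push_cast; ring

lemma enorm_average_ball_le_two_pow_mul_localBMONorm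
    (hK : ∀ x r, μ (ball x (2 * r)) ≤ K * μ (ball x r)) (hf : LocallyIntegrable f μ) (hr : 0 < r)
    {k : ℕ} (hk : R ≤ 2 ^ k * r) :
    ‖⨍ y in ball x r, f y ∂μ‖ₑ ≤ 2 ^ k * ((1 + K) * localBMONorm μ R f) := by
  have hk2 : (k : ℝ≥0∞) ≤ 2 ^ k := by exact_mod_cast k.lt_two_pow_self.le
  calc ‖⨍ y in ball x r, f y ∂μ‖ₑ
      ≤ ‖⨍ y in ball x (2 ^ k * r), f y ∂μ‖ₑ + k * (K * bmoSeminorm μ f) :=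
        enorm_average_ball_le_average_ball_two_pow_mul_add hK hf hr k
    _ ≤ 1 * localBMONorm μ R f + 2 ^ k * (K * localBMONorm μ R f) := by
        rw [one_mul]
        gcongr
        · exact (enorm_setAverage_le f).trans
            ((setLAverage_enorm_ball_le_largeBallNorm hk).trans le_add_self)
        · exact le_self_add
    _ ≤ 2 ^ k * localBMONorm μ R f + 2 ^ k * (K * localBMONorm μ R f) := by
        gcongr
        exact one_le_pow₀ one_le_two
    _ = 2 ^ k * ((1 + K) * localBMONorm μ R f) := by ring

lemma ofReal_mul_enorm_average_ball_le
    (hK : ∀ x r, μ (ball x (2 * r)) ≤ K * μ (ball x r)) (hf : LocallyIntegrable f μ) (hr : 0 < r)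
    (hrR : r ≤ R) :
    ENNReal.ofReal r * ‖⨍ y in ball x r, f y ∂μ‖ₑ ≤
      2 * ENNReal.ofReal R * ((1 + K) * localBMONorm μ R f) := by
  obtain ⟨k, hk, hk'⟩ : ∃ k : ℕ, 2 ^ k * r ≤ 2 * R ∧ R ≤ 2 ^ k * r := by
    obtain ⟨k, hk, hk'⟩ :=
      exists_nat_pow_near ((one_le_div hr).2 (by linarith : r ≤ 2 * R)) one_lt_two
    rw [le_div_iff₀ hr] at hk
    rw [div_lt_iff₀ hr, pow_succ] at hk'
    exact ⟨k, hk, by linarith⟩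
  have hscale : ENNReal.ofReal r * 2 ^ k ≤ 2 * ENNReal.ofReal R := by
    rw [mul_comm]
    simpa [ENNReal.ofReal_mul, ENNReal.ofReal_pow] using ENNReal.ofReal_le_ofReal hk
  calc ENNReal.ofReal r * ‖⨍ y in ball x r, f y ∂μ‖ₑ
      ≤ ENNReal.ofReal r * (2 ^ k * ((1 + K) * localBMONorm μ R f)) := by
        gcongr
        exact enorm_average_ball_le_two_pow_mul_localBMONorm hK hf hr hk'
    _ = ENNReal.ofReal r * 2 ^ k * ((1 + K) * localBMONorm μ R f) := (mul_assoc _ _ _).symm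
    _ ≤ 2 * ENNReal.ofReal R * ((1 + K) * localBMONorm μ R f) := by gcongr

end Growth

section Multiplier

variable {𝕜 : Type*} [NormedField 𝕜] [NormedSpace 𝕜 F] {ψ : X → 𝕜} {b L : ℝ≥0}
  [ProperSpace X] [BorelSpace X] [μ.IsOpenPosMeasure]
  [IsFiniteMeasureOnCompacts μ] [CompleteSpace F]

lemma meanOsc_smul_ball_le (hb : ∀ y, ‖ψ y‖₊ ≤ b) (hψ : LipschitzWith L ψ)
    (hf : IntegrableOn f (ball x r) μ) (hr : 0 < r) :
    meanOsc μ (fun y => ψ y • f y) (ball x r) ≤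
      2 * (b * meanOsc μ f (ball x r)
        + L * (ENNReal.ofReal r * ‖⨍ y in ball x r, f y ∂μ‖ₑ)) := by
  have hpos : μ (ball x r) ≠ 0 := (measure_ball_pos μ x hr).ne'
  have hfin : μ (ball x r) ≠ ∞ := measure_ball_lt_top.ne
  set c := ⨍ y in ball x r, f y ∂μ
  have hψf : IntegrableOn (fun y => ψ y • f y) (ball x r) μ :=
    hf.bdd_smul b hψ.continuous.aestronglyMeasurable (ae_of_all _ hb)
  refine (meanOsc_le_two_mul hpos hfin hψf (ψ x • c)).trans ?_
  gcongr
  calc ⨍⁻ y in ball x r, ‖ψ y • f y - ψ x • c‖ₑ ∂μ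
      ≤ ⨍⁻ y in ball x r, (b * ‖f y - c‖ₑ + L * (ENNReal.ofReal r * ‖c‖ₑ)) ∂μ :=
        setLAverage_mono measurableSet_ball fun y hy => enorm_smul_sub_smul_le (hb y) hψ hy _ _
    _ = b * meanOsc μ f (ball x r) + L * (ENNReal.ofReal r * ‖c‖ₑ) := by
        rw [setLAverage_add_const hpos hfin, setLAverage_const_mul ENNReal.coe_ne_top, meanOsc]

lemma meanOsc_smul_ball_le_of_le_radius (hb : ∀ y, ‖ψ y‖₊ ≤ b) (hψ : Continuous ψ)
    (hf : IntegrableOn f (ball x r) μ) (hr : 0 < r) (hRr : R ≤ r) :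
    meanOsc μ (fun y => ψ y • f y) (ball x r) ≤ 2 * (b * largeBallNorm μ R f) := by
  have hosc := meanOsc_le_two_mul (measure_ball_pos μ x hr).ne' measure_ball_lt_top.ne
    (hf.bdd_smul b hψ.aestronglyMeasurable (ae_of_all _ hb)) 0
  simp only [sub_zero] at hosc
  refine hosc.trans ?_
  gcongr
  exact (setLAverage_enorm_ball_le_largeBallNorm hRr).trans (largeBallNorm_smul_le hb)

lemma bmoSeminorm_smul_le (hK : ∀ x r, μ (ball x (2 * r)) ≤ K * μ (ball x r))
    (hb : ∀ y, ‖ψ y‖₊ ≤ b) (hψ : LipschitzWith L ψ) (hf : LocallyIntegrable f μ) (R : ℝ) :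
    bmoSeminorm μ (fun y => ψ y • f y) ≤
      2 * (b + 2 * (L * ENNReal.ofReal R) * (1 + K)) * localBMONorm μ R f := by
  refine iSup_le fun x => iSup₂_le fun r hr => ?_
  have hf_ball : IntegrableOn f (ball x r) μ := integrableOn_ball_of_locallyIntegrable hf
  rcases le_total r R with hrR | hRr
  · calc meanOsc μ (fun y => ψ y • f y) (ball x r)
        ≤ 2 * (b * meanOsc μ f (ball x r)
            + L * (ENNReal.ofReal r * ‖⨍ y in ball x r, f y ∂μ‖ₑ)) :=
          meanOsc_smul_ball_le hb hψ hf_ball hr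
      _ ≤ 2 * (b * localBMONorm μ R f
            + L * (2 * ENNReal.ofReal R * ((1 + K) * localBMONorm μ R f))) := by
          gcongr 2 * (b * ?_ + L * ?_)
          · exact (meanOsc_ball_le_bmoSeminorm hr).trans le_self_add
          · exact ofReal_mul_enorm_average_ball_le hK hf hr hrR
      _ = 2 * (b + 2 * (L * ENNReal.ofReal R) * (1 + K)) * localBMONorm μ R f := by ring
  · calc meanOsc μ (fun y => ψ y • f y) (ball x r)
        ≤ 2 * (b * largeBallNorm μ R f) :=
          meanOsc_smul_ball_le_of_le_radius hb hψ.continuous hf_ball hr hRr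
      _ ≤ 2 * ((b + 2 * (L * ENNReal.ofReal R) * (1 + K)) * localBMONorm μ R f) := by
          gcongr
          exacts [le_self_add, le_add_self]
      _ = 2 * (b + 2 * (L * ENNReal.ofReal R) * (1 + K)) * localBMONorm μ R f :=
          (mul_assoc _ _ _).symm

theorem stmt9_general (hK : ∀ x r, μ (ball x (2 * r)) ≤ K * μ (ball x r))
    (hb : ∀ y, ‖ψ y‖₊ ≤ b) (hψ : LipschitzWith L ψ) (hf : LocallyIntegrable f μ) (R : ℝ) :
    localBMONorm μ R (fun y => ψ y • f y) ≤
      (3 * b + 4 * (L * ENNReal.ofReal R) * (1 + K)) * localBMONorm μ R f := by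
  calc bmoSeminorm μ (fun y => ψ y • f y) + largeBallNorm μ R (fun y => ψ y • f y)
      ≤ 2 * (b + 2 * (L * ENNReal.ofReal R) * (1 + K)) * localBMONorm μ R f
          + b * localBMONorm μ R f := by
        gcongr
        · exact bmoSeminorm_smul_le hK hb hψ hf R
        · exact (largeBallNorm_smul_le hb).trans (by gcongr; exact le_add_self)
    _ = (3 * b + 4 * (L * ENNReal.ofReal R) * (1 + K)) * localBMONorm μ R f := by ring

end Multiplier

end LocalBMO

section EuclideanSpace

lemma addHaar_ball_two_mul {V : Type*} [NormedAddCommGroup V] [NormedSpace ℝ V]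
    [MeasurableSpace V] [BorelSpace V] [FiniteDimensional ℝ V] (μ : Measure V) [μ.IsAddHaarMeasure]
    (x : V) (r : ℝ) :
    μ (ball x (2 * r)) = 2 ^ Module.finrank ℝ V * μ (ball x r) := by
  rw [Measure.addHaar_ball_mul_of_pos μ x two_pos, Measure.addHaar_ball_center μ x r,
    ENNReal.ofReal_pow two_pos.le, ENNReal.ofReal_ofNat]

lemma lipschitzWith_toNNReal_of_norm_fderiv_le {V W : Type*} [NormedAddCommGroup V]
    [NormedSpace ℝ V] [NormedAddCommGroup W] [NormedSpace ℝ W] {g : V → W} {C : ℝ}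
    (hg : Differentiable ℝ g) (hC : ∀ y, ‖fderiv ℝ g y‖ ≤ C) : LipschitzWith C.toNNReal g :=
  lipschitzWith_of_nnnorm_fderiv_le hg fun y => NNReal.le_toNNReal_of_coe_le (hC y)

variable {d : ℕ} {f ψ : E d → ℝ} {x : E d} {r : ℝ} {n : ℤ}

lemma ofReal_ballAvg_abs (hf : IntegrableOn f (ball x r)) :
    ENNReal.ofReal (ballAvg d (fun y => |f y|) x r) = ⨍⁻ y in ball x r, ‖f y‖ₑ ∂volume := by
  rw [ballAvg, ← measureReal_def, ← smul_eq_mul, ← setAverage_eq,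
    ofReal_setAverage hf.abs (ae_of_all _ fun y => abs_nonneg (f y)), setLAverage_eq]
  simp only [Real.enorm_eq_ofReal_abs]

lemma ofReal_oscB (hf : IntegrableOn f (ball x r)) :
    ENNReal.ofReal (oscB d f x r) = meanOsc volume f (ball x r) := by
  have havg : ballAvg d f x r = ⨍ y in ball x r, f y := (setAverage_eq ..).symm
  have hsub : IntegrableOn (fun y => f y - ballAvg d f x r) (ball x r) :=
    hf.sub (integrableOn_const measure_ball_lt_top.ne)
  rw [oscB, ofReal_ballAvg_abs hsub, havg, meanOsc]

lemma bmonNorm_eq_localBMONorm (hf : LocallyIntegrable f) :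
    bmonNorm d n f = localBMONorm volume ((2 : ℝ) ^ (-(n : ℝ) / 2)) f := by
  simp only [bmonNorm, bmoNormE, localBMONorm, bmoSeminorm, largeBallNorm,
    ofReal_oscB (integrableOn_ball_of_locallyIntegrable hf),
    ofReal_ballAvg_abs (integrableOn_ball_of_locallyIntegrable hf)]

lemma bmonNorm_mul_le {A : ℝ} (hA : 0 ≤ A) (hb : ∀ y, ‖ψ y‖₊ ≤ 1)
    (hψ : LipschitzWith (A * (2 : ℝ) ^ ((n : ℝ) / 2)).toNNReal ψ) (hf : LocallyIntegrable f) :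
    bmonNorm d n (fun y => ψ y * f y) ≤
      ENNReal.ofReal (3 + 4 * A * (1 + 2 ^ d)) * bmonNorm d n f := by
  have hdoubling (x : E d) (r : ℝ) :
      volume (ball x (2 * r)) ≤ (2 ^ d : ℝ≥0) * volume (ball x r) := by
    simp [addHaar_ball_two_mul]
  have hscale : ENNReal.ofReal (A * (2 : ℝ) ^ ((n : ℝ) / 2))
      * ENNReal.ofReal ((2 : ℝ) ^ (-(n : ℝ) / 2)) = ENNReal.ofReal A := by
    rw [← ENNReal.ofReal_mul (by positivity), mul_assoc, ← Real.rpow_add two_pos, neg_div,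
      add_neg_cancel, Real.rpow_zero, mul_one]
  have hconst : ENNReal.ofReal (3 + 4 * A * (1 + 2 ^ d)) =
      3 * (1 : ℝ≥0) + 4 * ENNReal.ofReal A * (1 + (2 ^ d : ℝ≥0)) := by
    rw [ENNReal.ofReal_add (by positivity) (by positivity), ENNReal.ofReal_mul (by positivity),
      ENNReal.ofReal_mul (by positivity), ENNReal.ofReal_add (by positivity) (by positivity),
      ENNReal.ofReal_pow (by positivity)]
    simp
  rw [bmonNorm_eq_localBMONorm hf, bmonNorm_eq_localBMONorm (hf.continuous_mul hψ.continuous),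
    hconst, ← hscale]
  exact stmt9_general hdoubling hb hψ hf _

end EuclideanSpace

/-- `ψ_{n,k}` is a pointwise multiplier of `bmo_n`, uniformly in `n` and `k`. -/
theorem stmt9 (d : ℕ) (hd : 3 ≤ d) :
    ∀ A : ℝ, 0 < A → ∃ C : ℝ, 0 < C ∧
      ∀ (n : ℤ) (x₀ : E d) (ψ : E d → ℝ),
        ContDiff ℝ (⊤ : ℕ∞) ψ → (∀ y, 0 ≤ ψ y ∧ ψ y ≤ 1) →
        tsupport ψ ⊆ ball x₀ ((2:ℝ) ^ (1 - (n:ℝ)/2)) →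
        (∀ y, ‖fderiv ℝ ψ y‖ ≤ A * (2:ℝ) ^ ((n:ℝ)/2)) →
        ∀ f : E d → ℝ, LocallyIntegrable f volume → bmonNorm d n f < ⊤ →
        bmonNorm d n (fun y => ψ y * f y) ≤ ENNReal.ofReal C * bmonNorm d n f :=
  fun A hA => ⟨3 + 4 * A * (1 + 2 ^ d), by positivity, fun _ _ ψ hψ h01 _ hgrad f hf _ =>
    bmonNorm_mul_le hA.le (fun y => (Real.nnnorm_of_nonneg (h01 y).1).trans_le (h01 y).2)
      (lipschitzWith_toNNReal_of_norm_fderiv_le (hψ.differentiable (by simp)) hgrad) hf⟩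
end
end
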